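/- Let h ∈ ℕ and let T be a rooted tree of height at most h. Then |t_h(T,α) − t_h(T,β)| ≤ |E(T)| · W^h(α,β) for all α,β ∈ M_h, and |t(T,μ) − t(T,ν)| ≤ |V(T)| · δW^h(μ,ν) for all Borel probability measures μ,ν on M_h. -/

import Mathlib

open MeasureTheory Set

noncomputable section

/-- Borel measures of total mass at most one on `X`. -/
abbrev SubProb (X : Type) [MeasurableSpace X] : Type :=
  {μ : Measure X // μ Set.univ ≤ 1}

/-- The weak topology on `SubProb X`: the coarsest topology making all maps
`μ ↦ ∫ f dμ` for bounded continuous `f` continuous. -/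
def subProbWeakTop (X : Type) [MeasurableSpace X] [TopologicalSpace X] :
    TopologicalSpace (SubProb X) :=
  ⨅ f : BoundedContinuousFunction X ℝ,
    TopologicalSpace.induced (fun μ => ∫ x, f x ∂μ.val) inferInstance

/-- Iterated degree measure spaces with their (weak) topologies:
`M 0` is a one-point space and `M (h+1)` is the space of Borel measures of total
mass at most one on `M h` with the weak topology. -/
def IDM : ℕ → Σ X : Type, TopologicalSpace X
  | 0 => ⟨Unit, inferInstance⟩
  | (h+1) =>
      let p := IDM h
      ⟨@SubProb p.1 (@borel p.1 p.2), @subProbWeakTop p.1 (@borel p.1 p.2) p.2⟩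

/-- The space of iterated degree measures of depth `h`. -/
def M (h : ℕ) : Type := (IDM h).1

instance (h : ℕ) : TopologicalSpace (M h) := (IDM h).2
instance (h : ℕ) : MeasurableSpace (M h) := borel (M h)
instance (h : ℕ) : BorelSpace (M h) := ⟨rfl⟩

def toSub {h : ℕ} (α : M (h+1)) : SubProb (M h) := α
def ofSub {h : ℕ} (μ : SubProb (M h)) : M (h+1) := μ
/-- The underlying measure of an iterated degree measure. -/
def toMeas {h : ℕ} (α : M (h+1)) : Measure (M h) := (toSub α).1

def uwAux {X : Type _} [MeasurableSpace X] (d : X → X → ℝ) (μ ν : Measure X) : ℝ :=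
  (μ Set.univ).toReal - (ν Set.univ).toReal +
    sInf {r : ℝ | ∃ γ : Measure (X × X), γ Set.univ ≤ 1 ∧
      γ.map Prod.fst ≤ μ ∧ γ.map Prod.snd = ν ∧ r = ∫ p, d p.1 p.2 ∂γ}

open Classical in
/-- The unbalanced Wasserstein distance w.r.t. a distance function `d`:
`‖μ‖ - ‖ν‖` plus the optimal transport cost over sub-couplings, where w.l.o.g.
`‖μ‖ ≥ ‖ν‖`. -/
def uwDist {X : Type _} [MeasurableSpace X] (d : X → X → ℝ) (μ ν : Measure X) : ℝ :=
  if ν Set.univ ≤ μ Set.univ then uwAux d μ ν else uwAux d ν μ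

/-- The classical Wasserstein distance (over couplings) w.r.t. a cost `d`. -/
def wassersteinDist {X : Type _} [MeasurableSpace X] (d : X → X → ℝ)
    (μ ν : Measure X) : ℝ :=
  sInf {r : ℝ | ∃ γ : Measure (X × X),
    γ.map Prod.fst = μ ∧ γ.map Prod.snd = ν ∧ r = ∫ p, d p.1 p.2 ∂γ}

/-- The iterated unbalanced Wasserstein metrics `W^h` on the spaces `M h`. -/
def Wdist : (h : ℕ) → M h → M h → ℝ
  | 0, _, _ => 0
  | (h+1), α, β => uwDist (Wdist h) (toMeas α) (toMeas β)

/-- Borel probability measures on `X`. -/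
abbrev ProbM (X : Type) [MeasurableSpace X] : Type :=
  {μ : Measure X // IsProbabilityMeasure μ}

/-- The weak topology on Borel probability measures. -/
def probWeakTop (X : Type) [MeasurableSpace X] [TopologicalSpace X] :
    TopologicalSpace (ProbM X) :=
  ⨅ f : BoundedContinuousFunction X ℝ,
    TopologicalSpace.induced (fun μ => ∫ x, f x ∂μ.val) inferInstance

/-- Rooted trees of height at most `h`: a tree of height at most `h+1` is a root
together with a list of subtrees of height at most `h`. -/
def TreeH : ℕ → Type
  | 0 => Unit
  | (h+1) => List (TreeH h)

/-- The number of vertices of a rooted tree. -/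
def nV : (h : ℕ) → TreeH h → ℕ
  | 0, _ => 1
  | (h+1), cs => 1 + (cs.map (nV h)).sum

/-- The number of edges of a rooted tree. -/
def nE : (h : ℕ) → TreeH h → ℕ
  | 0, _ => 0
  | (h+1), cs => cs.length + (cs.map (nE h)).sum

/-- The homomorphism density function `t_h(T, ·) : M h → ℝ` of a rooted tree `T` of
height at most `h`. -/
def homDen : (h : ℕ) → TreeH h → M h → ℝ
  | 0, _, _ => 1
  | (h+1), cs, α => (cs.map fun T => ∫ β, homDen h T β ∂(toMeas α)).prod

/-!
Call `f` *controlled* by `L` if `|f| ≤ L` and `|f x - f y| ≤ L * d x y`. Along a subcoupling of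
`μ` and `ν`, the integrals of such an `f` differ by at most `L` times the transport cost, plus `L`
times the untransported mass `‖μ‖ - ‖ν‖`; taking the infimum bounds their difference by `L` times
the unbalanced Wasserstein distance. If the density of a subtree `S` is `|E(S)|`-Lipschitz, it is
controlled by `1 + |E(S)|`, the number of edges that `S` and its root edge contribute to `T`.
A product of numbers in `[-1, 1]` is `1`-Lipschitz in each factor, so these constants add up to
`|E(T)|`.

For the cost integrals to be meaningful, `W^h` has to be Borel. It is lower semicontinuous, by
induction on `h`: the infimum runs over the fibres of a closed relation with compact total space,
and integrating a bounded lower semicontinuous cost is lower semicontinuous in the plan.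
-/

open Filter Topology TopologicalSpace
open scoped NNReal ENNReal BoundedContinuousFunction

section Semicontinuity

variable {X Y : Type*} [TopologicalSpace X] [TopologicalSpace Y]

lemma lowerSemicontinuousOn_sInf_image_fiber [CompactSpace Y] {K : Set (X × Y)} (hK : IsClosed K)
    {F : X × Y → ℝ} (hF : LowerSemicontinuous F) :
    LowerSemicontinuousOn (fun x => sInf ((fun y => F (x, y)) '' {y | (x, y) ∈ K}))
      (Prod.fst '' K) := by
  refine lowerSemicontinuousOn_iff_preimage_Iic.2 fun c =>
    ⟨Prod.fst '' (K ∩ F ⁻¹' Iic c), isClosedMap_fst_of_compactSpace _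
      (hK.inter (hF.isClosed_preimage c)), ?_⟩
  ext x
  refine and_congr_right fun hx => ?_
  have attained : ∃ y, (x, y) ∈ K ∧
      IsLeast ((fun y => F (x, y)) '' {y | (x, y) ∈ K}) (F (x, y)) := by
    obtain ⟨⟨x, y₀⟩, hy₀, rfl⟩ := hx
    have fiber_compact : IsCompact {y | (x, y) ∈ K} :=
      (hK.preimage (Continuous.prodMk_right x)).isCompact
    obtain ⟨y, hy, hmin⟩ := ((hF.comp (Continuous.prodMk_right x)).lowerSemicontinuousOn
      _).exists_isMinOn ⟨y₀, hy₀⟩ fiber_compact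
    exact ⟨y, hy, mem_image_of_mem _ hy, forall_mem_image.2 hmin⟩
  obtain ⟨y, hy, hleast⟩ := attained
  simp only [mem_preimage, mem_Iic, hleast.csInf_eq]
  constructor
  · exact fun hc => ⟨(x, y), ⟨hy, hc⟩, rfl⟩
  · rintro ⟨⟨_, y'⟩, ⟨hy', hc⟩, rfl⟩
    exact (hleast.2 (mem_image_of_mem _ hy')).trans hc

lemma lowerSemicontinuous_of_isClosed_cover {f g₁ g₂ : X → ℝ} {s t : Set X} (hs : IsClosed s)
    (ht : IsClosed t) (hst : s ∪ t = univ) (hg₁ : LowerSemicontinuousOn g₁ s)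
    (hg₂ : LowerSemicontinuousOn g₂ t) (hfg₁ : EqOn f g₁ s) (hfg₂ : EqOn f g₂ t) :
    LowerSemicontinuous f := by
  refine lowerSemicontinuous_iff_isClosed_preimage.2 fun c => ?_
  obtain ⟨u, hu, hsu⟩ := lowerSemicontinuousOn_iff_preimage_Iic.1 hg₁ c
  obtain ⟨v, hv, htv⟩ := lowerSemicontinuousOn_iff_preimage_Iic.1 hg₂ c
  rw [← univ_inter (f ⁻¹' Iic c), ← hst, union_inter_distrib_right, hfg₁.inter_preimage_eq,
    hfg₂.inter_preimage_eq, hsu, htv]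
  exact (hs.inter hu).union (ht.inter hv)

end Semicontinuity

section LipschitzEnvelope

variable {X : Type*} [PseudoMetricSpace X] {g : X → ℝ}

/-- The Pasch–Hausdorff envelope of `g`: the largest `K`-Lipschitz function below `g`. For `g`
lower semicontinuous and bounded below it increases to `g` as `K → ∞`. -/
def lipschitzEnvelope (K : ℝ≥0) (g : X → ℝ) (x : X) : ℝ :=
  ⨅ y, g y + K * dist x y

lemma bddBelow_range_add_mul_dist (hg : BddBelow (range g)) (K : ℝ≥0) (x : X) :
    BddBelow (range fun y => g y + K * dist x y) := by
  obtain ⟨b, hb⟩ := hg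
  refine ⟨b, forall_mem_range.2 fun y => ?_⟩
  exact (hb (mem_range_self y)).trans (le_add_of_nonneg_right (by positivity))

lemma lipschitzEnvelope_le (hg : BddBelow (range g)) (K : ℝ≥0) (x : X) :
    lipschitzEnvelope K g x ≤ g x :=
  (ciInf_le (bddBelow_range_add_mul_dist hg K x) x).trans_eq (by simp)

lemma le_lipschitzEnvelope {b : ℝ} (hb : ∀ x, b ≤ g x) (K : ℝ≥0) (x : X) :
    b ≤ lipschitzEnvelope K g x :=
  have : Nonempty X := ⟨x⟩
  le_ciInf fun y => (hb y).trans (le_add_of_nonneg_right (by positivity))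

lemma lipschitzWith_lipschitzEnvelope (hg : BddBelow (range g)) (K : ℝ≥0) :
    LipschitzWith K (lipschitzEnvelope K g) := by
  refine LipschitzWith.of_le_add_mul K fun x y => ?_
  have : Nonempty X := ⟨x⟩
  rw [← sub_le_iff_le_add]
  refine le_ciInf fun z => sub_le_iff_le_add.2 ?_
  calc lipschitzEnvelope K g x
      ≤ g z + K * dist x z := ciInf_le (bddBelow_range_add_mul_dist hg K x) z
    _ ≤ g z + K * (dist x y + dist y z) := by gcongr; exact dist_triangle x y z
    _ = g z + K * dist y z + K * dist x y := by ring

lemma tendsto_lipschitzEnvelope (hg : LowerSemicontinuous g) (hb : BddBelow (range g)) (x : X) :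
    Tendsto (fun K => lipschitzEnvelope K g x) atTop (𝓝 (g x)) := by
  have : Nonempty X := ⟨x⟩
  refine tendsto_order.2 ⟨fun c hc => ?_, fun c hc =>
    Eventually.of_forall fun K => (lipschitzEnvelope_le hb K x).trans_lt hc⟩
  obtain ⟨c', hcc', hc'⟩ := exists_between hc
  obtain ⟨δ, hδ, near⟩ := Metric.eventually_nhds_iff.1 (hg x c' hc')
  obtain ⟨b, hb⟩ := hb
  have far : ∀ᶠ K : ℝ≥0 in atTop, c' ≤ b + K * δ :=
    (tendsto_atTop_add_const_left _ b
      (NNReal.tendsto_coe_atTop.2 tendsto_id |>.atTop_mul_const hδ)).eventually_ge_atTop c'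
  filter_upwards [far] with K hK
  refine hcc'.trans_le (le_ciInf fun y => ?_)
  rcases lt_or_ge (dist y x) δ with hy | hy
  · exact (near hy).le.trans (le_add_of_nonneg_right (by positivity))
  · rw [dist_comm] at hy
    exact hK.trans (by gcongr; exact hb (mem_range_self y))

end LipschitzEnvelope

section FiniteMeasure

variable {X : Type*} [TopologicalSpace X] [PseudoMetrizableSpace X] [MeasurableSpace X]

lemma lowerSemicontinuous_integral_finiteMeasure [OpensMeasurableSpace X] {g : X → ℝ}
    (hg : LowerSemicontinuous g) {C : ℝ} (hC : ∀ x, |g x| ≤ C) :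
    LowerSemicontinuous fun μ : FiniteMeasure X => ∫ x, g x ∂(μ : Measure X) := by
  let := pseudoMetrizableSpacePseudoMetric X
  have hb : BddBelow (range g) := ⟨-C, forall_mem_range.2 fun x => (abs_le.1 (hC x)).1⟩
  have envelope_continuous (K : ℝ≥0) : Continuous (lipschitzEnvelope K g) :=
    (lipschitzWith_lipschitzEnvelope hb K).continuous
  have envelope_bound (K : ℝ≥0) (x : X) : ‖lipschitzEnvelope K g x‖ ≤ C := abs_le.2
    ⟨le_lipschitzEnvelope (fun y => (abs_le.1 (hC y)).1) K x,
      (lipschitzEnvelope_le hb K x).trans (abs_le.1 (hC x)).2⟩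
  have integral_continuous (K : ℝ≥0) : Continuous fun μ : FiniteMeasure X =>
      ∫ x, lipschitzEnvelope K g x ∂(μ : Measure X) :=
    FiniteMeasure.continuous_integral_boundedContinuousFunction
      (BoundedContinuousFunction.ofNormedAddCommGroup _ (envelope_continuous K) C
        (envelope_bound K))
  intro μ c hc
  have integral_tendsto : Tendsto (fun K => ∫ x, lipschitzEnvelope K g x ∂(μ : Measure X)) atTop
      (𝓝 (∫ x, g x ∂(μ : Measure X))) :=
    tendsto_integral_filter_of_dominated_convergence (fun _ => C)
      (Eventually.of_forall fun K => (envelope_continuous K).aestronglyMeasurable)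
      (Eventually.of_forall fun K => ae_of_all _ (envelope_bound K)) (integrable_const C)
      (ae_of_all _ (tendsto_lipschitzEnvelope hg hb))
  obtain ⟨K, hK⟩ := (integral_tendsto.eventually_const_lt hc).exists
  filter_upwards [(integral_continuous K).continuousAt.eventually_const_lt hK] with ν hν
  refine hν.trans_le (integral_mono ?_ ?_ (lipschitzEnvelope_le hb K))
  · exact .of_bound (envelope_continuous K).aestronglyMeasurable C (ae_of_all _ (envelope_bound K))
  · exact .of_bound hg.measurable.aestronglyMeasurable C (ae_of_all _ hC)

variable [BorelSpace X]

lemma measure_le_of_forall_lintegral_le {μ ν : Measure X} [IsFiniteMeasure μ] [IsFiniteMeasure ν]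
    (h : ∀ f : X →ᵇ ℝ≥0, ∫⁻ x, f x ∂μ ≤ ∫⁻ x, f x ∂ν) : μ ≤ ν := by
  have le_of_isClosed {F : Set X} (hF : IsClosed F) : μ F ≤ ν F :=
    ge_of_tendsto' (HasOuterApproxClosed.tendsto_lintegral_apprSeq hF ν) fun n =>
      (HasOuterApproxClosed.measure_le_lintegral hF μ n).trans (h _)
  refine Measure.le_intro fun s hs _ => ?_
  rw [hs.measure_eq_iSup_isClosed_of_ne_top (measure_ne_top μ s)]
  exact iSup₂_le fun F hFs => iSup_le fun hF => (le_of_isClosed hF).trans (measure_mono hFs)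

lemma isClosed_setOf_finiteMeasure_le :
    IsClosed {p : FiniteMeasure X × FiniteMeasure X | (p.1 : Measure X) ≤ p.2} := by
  have testAgainst_iff : {p : FiniteMeasure X × FiniteMeasure X | (p.1 : Measure X) ≤ p.2} =
      ⋂ f : X →ᵇ ℝ≥0, {p | p.1.testAgainstNN f ≤ p.2.testAgainstNN f} := by
    ext p
    simp only [mem_ofPred_eq, mem_iInter]
    simp only [← ENNReal.coe_le_coe, FiniteMeasure.testAgainstNN_coe_eq]
    exact ⟨fun hp f => lintegral_mono' hp le_rfl, measure_le_of_forall_lintegral_le⟩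
  rw [testAgainst_iff]
  exact isClosed_iInter fun f => isClosed_le
    ((FiniteMeasure.continuous_testAgainstNN_eval f).comp continuous_fst)
    ((FiniteMeasure.continuous_testAgainstNN_eval f).comp continuous_snd)

lemma exists_seq_testAgainstNN_separating [CompactSpace X] :
    ∃ u : ℕ → X →ᵇ ℝ≥0, ∀ μ ν : FiniteMeasure X,
      (∀ n, μ.testAgainstNN (u n) = ν.testAgainstNN (u n)) → μ = ν := by
  have : SeparableSpace (X →ᵇ ℝ≥0) :=
    (ContinuousMap.isometryEquivBoundedOfCompact X ℝ≥0).surjective.denseRange.separableSpace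
      (ContinuousMap.isometryEquivBoundedOfCompact X ℝ≥0).continuous
  refine ⟨denseSeq (X →ᵇ ℝ≥0), fun μ ν h => FiniteMeasure.injective_toWeakDualBCNN ?_⟩
  exact DFunLike.coe_injective <| (denseRange_denseSeq (X →ᵇ ℝ≥0)).equalizer
    μ.testAgainstNN_lipschitz.continuous ν.testAgainstNN_lipschitz.continuous (funext h)

end FiniteMeasure

namespace SubProb

variable {X : Type} [MeasurableSpace X]

instance (μ : SubProb X) : IsFiniteMeasure μ.1 :=
  ⟨μ.2.trans_lt ENNReal.one_lt_top⟩

lemma measureReal_univ_le_one (μ : SubProb X) : μ.1.real univ ≤ 1 :=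
  ENNReal.toReal_le_of_le_ofReal zero_le_one (by simpa using μ.2)

/-- A measure of mass at most one as a finite measure, which gives access to the weak topology
on `FiniteMeasure X`. -/
def toFiniteMeasure (μ : SubProb X) : FiniteMeasure X :=
  ⟨μ.1, inferInstance⟩

lemma toFiniteMeasure_injective : Function.Injective (toFiniteMeasure (X := X)) :=
  fun _ _ h => Subtype.ext (congrArg FiniteMeasure.toMeasure h)

lemma range_toFiniteMeasure : range (toFiniteMeasure (X := X)) = {μ | μ.mass ≤ 1} := by
  have mass_le_one_iff (μ : FiniteMeasure X) : μ.mass ≤ 1 ↔ (μ : Measure X) univ ≤ 1 := by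
    rw [← FiniteMeasure.ennreal_mass, ENNReal.coe_le_one_iff]
  ext μ
  simp only [mem_range, mem_ofPred_eq, mass_le_one_iff]
  exact ⟨by rintro ⟨μ, rfl⟩; exact μ.2, fun hμ => ⟨⟨μ, hμ⟩, rfl⟩⟩

variable [TopologicalSpace X]

instance : TopologicalSpace (SubProb X) :=
  subProbWeakTop X

lemma continuous_integral (f : X →ᵇ ℝ) : Continuous fun μ : SubProb X => ∫ x, f x ∂μ.1 :=
  continuous_iff_le_induced.2 (iInf_le _ f)

variable [OpensMeasurableSpace X]

lemma continuous_toFiniteMeasure : Continuous (toFiniteMeasure (X := X)) :=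
  continuous_iff_continuousAt.2 fun μ =>
    FiniteMeasure.tendsto_iff_forall_integral_tendsto.2 fun f => (continuous_integral f).tendsto μ

lemma isInducing_toFiniteMeasure : IsInducing (toFiniteMeasure (X := X)) :=
  ⟨le_antisymm continuous_toFiniteMeasure.le_induced <| le_iInf fun f => le_trans
    (induced_mono (FiniteMeasure.continuous_integral_boundedContinuousFunction f).le_induced)
    induced_compose.le⟩

lemma continuous_measureReal_univ : Continuous fun μ : SubProb X => μ.1.real univ :=
  NNReal.continuous_coe.comp (FiniteMeasure.continuous_mass.comp continuous_toFiniteMeasure)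

end SubProb

namespace SubProb

variable {X : Type} [TopologicalSpace X] [CompactSpace X] [MetrizableSpace X] [MeasurableSpace X]
  [BorelSpace X]

instance : CompactSpace (SubProb X) := by
  rw [← isCompact_univ_iff, isInducing_toFiniteMeasure.isCompact_iff, image_univ,
    range_toFiniteMeasure]
  exact isCompact_setOfPred_finiteMeasure_le_of_compactSpace X 1

instance : MetrizableSpace (SubProb X) := by
  obtain ⟨u, separating⟩ := exists_seq_testAgainstNN_separating (X := X)
  refine Metric.PiNatEmbed.TopologicalSpace.MetrizableSpace.of_countable_separating
    (fun n (μ : SubProb X) => μ.toFiniteMeasure.testAgainstNN (u n)) (fun n =>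
      (FiniteMeasure.continuous_testAgainstNN_eval _).comp continuous_toFiniteMeasure)
    fun μ ν hne => ?_
  by_contra! h
  exact hne (toFiniteMeasure_injective (separating _ _ h))

end SubProb

section TransportCost

variable {X : Type*} [MeasurableSpace X] {d : X → X → ℝ}

/-- The cost `∫ d(x, y) dγ(x, y)` of a transport plan `γ`. -/
def transportCost (d : X → X → ℝ) (γ : Measure (X × X)) : ℝ :=
  ∫ p, d p.1 p.2 ∂γ

lemma transportCost_nonneg (h0 : ∀ x y, 0 ≤ d x y) (γ : Measure (X × X)) :
    0 ≤ transportCost d γ :=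
  integral_nonneg fun _ => h0 _ _

lemma transportCost_map_swap (d : X → X → ℝ) (γ : Measure (X × X)) :
    transportCost d (γ.map Prod.swap) = transportCost (fun x y => d y x) γ :=
  integral_map_equiv MeasurableEquiv.prodComm _

lemma transportCost_le_measureReal_univ (h1 : ∀ x y, |d x y| ≤ 1) (γ : Measure (X × X))
    [IsFiniteMeasure γ] : transportCost d γ ≤ γ.real univ := by
  have norm_le : ‖transportCost d γ‖ ≤ 1 * γ.real univ :=
    norm_integral_le_of_norm_le_const (ae_of_all γ fun p => h1 p.1 p.2)
  exact (le_abs_self _).trans (norm_le.trans_eq (one_mul _))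

variable {f : X → ℝ} {C L : ℝ}

lemma integrable_uncurry_of_abs_le (hdm : Measurable (Function.uncurry d))
    (hdC : ∀ x y, |d x y| ≤ C) (γ : Measure (X × X)) [IsFiniteMeasure γ] :
    Integrable (Function.uncurry d) γ :=
  .of_bound hdm.aestronglyMeasurable C (ae_of_all γ fun p => hdC p.1 p.2)

lemma abs_integral_map_fst_sub_integral_map_snd_le {γ : Measure (X × X)}
    (hfst : Integrable f (γ.map Prod.fst)) (hsnd : Integrable f (γ.map Prod.snd))
    (hd : Integrable (Function.uncurry d) γ) (hf : ∀ x y, |f x - f y| ≤ L * d x y) :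
    |∫ x, f x ∂γ.map Prod.fst - ∫ y, f y ∂γ.map Prod.snd| ≤ L * transportCost d γ := by
  have hfst' : Integrable (fun p : X × X => f p.1) γ := hfst.comp_measurable measurable_fst
  have hsnd' : Integrable (fun p : X × X => f p.2) γ := hsnd.comp_measurable measurable_snd
  rw [integral_map measurable_fst.aemeasurable hfst.1,
    integral_map measurable_snd.aemeasurable hsnd.1, ← integral_sub hfst' hsnd', transportCost,
    ← integral_const_mul]
  exact norm_integral_le_of_norm_le (f := fun p : X × X => f p.1 - f p.2) (hd.const_mul L)
    (ae_of_all γ fun p => hf p.1 p.2)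

lemma abs_integral_sub_le_mul_of_le {μ ν : Measure X} [IsFiniteMeasure μ] (hνμ : ν ≤ μ)
    (hfm : AEStronglyMeasurable f μ) (hfL : ∀ x, |f x| ≤ L) :
    |∫ x, f x ∂μ - ∫ x, f x ∂ν| ≤ L * (μ.real univ - ν.real univ) := by
  have : IsFiniteMeasure ν := isFiniteMeasure_of_le μ hνμ
  have decomp : μ - ν + ν = μ := Measure.sub_add_cancel_of_le hνμ
  have integrable : Integrable f μ := .of_bound hfm L (ae_of_all μ hfL)
  have mass_eq : μ.real univ - ν.real univ = (μ - ν).real univ := by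
    nth_rw 1 [← decomp]
    rw [measureReal_add_apply, add_sub_cancel_right]
  have integral_eq : ∫ x, f x ∂μ - ∫ x, f x ∂ν = ∫ x, f x ∂(μ - ν) := by
    nth_rw 1 [← decomp]
    rw [integral_add_measure (integrable.mono_measure Measure.sub_le)
      (integrable.mono_measure hνμ), add_sub_cancel_right]
  rw [mass_eq, integral_eq]
  exact norm_integral_le_of_norm_le_const (f := f) (ae_of_all (μ - ν) hfL)

end TransportCost

section WassersteinDistance

lemma le_mul_csInf {S : Set ℝ} {a L : ℝ} (hS : S.Nonempty) (hL : 0 ≤ L) (h : ∀ r ∈ S, a ≤ L * r) :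
    a ≤ L * sInf S := by
  rw [← smul_eq_mul, ← Real.sInf_smul_of_nonneg hL]
  exact le_csInf hS.smul_set (forall_mem_image.2 h)

variable {X : Type*} [MeasurableSpace X] {d : X → X → ℝ}

lemma wassersteinDist_nonneg (h0 : ∀ x y, 0 ≤ d x y) (μ ν : Measure X) :
    0 ≤ wassersteinDist d μ ν := by
  refine Real.sInf_nonneg ?_
  rintro _ ⟨γ, -, -, rfl⟩
  exact transportCost_nonneg h0 γ

lemma abs_integral_sub_le_mul_wassersteinDist {f : X → ℝ} {C L : ℝ}
    (hdm : Measurable (Function.uncurry d))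
    (hdC : ∀ x y, |d x y| ≤ C) (hL : 0 ≤ L) (hf : ∀ x y, |f x - f y| ≤ L * d x y)
    {μ ν : Measure X} [IsProbabilityMeasure μ] [IsProbabilityMeasure ν] (hμ : Integrable f μ)
    (hν : Integrable f ν) :
    |∫ x, f x ∂μ - ∫ x, f x ∂ν| ≤ L * wassersteinDist d μ ν := by
  refine le_mul_csInf ⟨_, μ.prod ν, by simp, by simp, rfl⟩ hL ?_
  rintro _ ⟨γ, rfl, rfl, rfl⟩
  have : IsProbabilityMeasure γ :=
    Measure.isProbabilityMeasure_of_map Prod.fst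
  exact abs_integral_map_fst_sub_integral_map_snd_le hμ hν
    (integrable_uncurry_of_abs_le hdm hdC γ) hf

end WassersteinDistance

section UnbalancedTransport

variable {X : Type} [MeasurableSpace X] {d : X → X → ℝ}

/-- The set `M(μ, ν)` of plans transporting a part of `μ` to all of `ν`. -/
def subcouplings (μ ν : Measure X) : Set (SubProb (X × X)) :=
  {γ | γ.1.map Prod.fst ≤ μ ∧ γ.1.map Prod.snd = ν}

lemma uwAux_eq_sInf_transportCost (d : X → X → ℝ) (μ ν : Measure X) :
    uwAux d μ ν = μ.real univ - ν.real univ +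
      sInf ((fun γ : SubProb (X × X) => transportCost d γ.1) '' subcouplings μ ν) := by
  refine congrArg (μ.real univ - ν.real univ + sInf ·) (Set.ext fun r => ?_)
  constructor
  · rintro ⟨γ, hγ, hfst, hsnd, rfl⟩
    exact ⟨⟨γ, hγ⟩, ⟨hfst, hsnd⟩, rfl⟩
  · rintro ⟨γ, ⟨hfst, hsnd⟩, rfl⟩
    exact ⟨γ.1, γ.2, hfst, hsnd, rfl⟩

lemma measure_univ_of_mem_subcouplings {μ ν : Measure X} {γ : SubProb (X × X)}
    (hγ : γ ∈ subcouplings μ ν) : γ.1 univ = ν univ := by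
  rw [← hγ.2, Measure.map_apply measurable_snd .univ, preimage_univ]

lemma subcouplings_nonempty_iff (μ ν : SubProb X) :
    (subcouplings μ.1 ν.1).Nonempty ↔ ν.1 univ ≤ μ.1 univ := by
  constructor
  · rintro ⟨γ, hγ⟩
    rw [← measure_univ_of_mem_subcouplings hγ]
    simpa [Measure.map_apply measurable_fst .univ] using hγ.1 univ
  intro h
  rcases eq_or_ne (μ.1 univ) 0 with hμ | hμ
  · have hν : ν.1 = 0 := Measure.measure_univ_eq_zero.1 (le_zero_iff.1 (h.trans_eq hμ))
    exact ⟨⟨0, by simp⟩, by simp [subcouplings, hν, Measure.zero_le]⟩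
  have inv_mul : (μ.1 univ)⁻¹ * μ.1 univ = 1 := ENNReal.inv_mul_cancel hμ (measure_ne_top _ _)
  have hsnd : ((μ.1 univ)⁻¹ • μ.1.prod ν.1).map Prod.snd = ν.1 := by
    rw [Measure.map_smul, Measure.map_snd_prod, smul_smul, inv_mul, one_smul]
  have hfst : ((μ.1 univ)⁻¹ • μ.1.prod ν.1).map Prod.fst ≤ μ.1 := by
    rw [Measure.map_smul, Measure.map_fst_prod, smul_smul]
    refine Measure.le_intro fun s _ _ => mul_le_of_le_one_left zero_le ?_
    exact (mul_le_mul_right h _).trans_eq inv_mul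
  refine ⟨⟨(μ.1 univ)⁻¹ • μ.1.prod ν.1, ?_⟩, hfst, hsnd⟩
  rw [← preimage_univ (f := Prod.snd), ← Measure.map_apply measurable_snd .univ, hsnd]
  exact ν.2

lemma uwAux_nonneg (h0 : ∀ x y, 0 ≤ d x y) {μ ν : Measure X} [IsFiniteMeasure μ]
    (h : ν univ ≤ μ univ) : 0 ≤ uwAux d μ ν := by
  have mass_le : ν.real univ ≤ μ.real univ := ENNReal.toReal_mono (measure_ne_top _ _) h
  rw [uwAux_eq_sInf_transportCost]
  exact add_nonneg (sub_nonneg.2 mass_le)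
    (Real.sInf_nonneg (forall_mem_image.2 fun γ _ => transportCost_nonneg h0 γ.1))

lemma uwAux_le_one (hd : ∀ x y, d x y ∈ Icc (0 : ℝ) 1) {μ ν : SubProb X}
    (h : ν.1 univ ≤ μ.1 univ) : uwAux d μ.1 ν.1 ≤ 1 := by
  obtain ⟨γ, hγ⟩ := (subcouplings_nonempty_iff μ ν).2 h
  have sInf_le : sInf ((fun γ : SubProb (X × X) => transportCost d γ.1) '' subcouplings μ.1 ν.1) ≤
      ν.1.real univ := calc
    sInf ((fun γ : SubProb (X × X) => transportCost d γ.1) '' subcouplings μ.1 ν.1)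
      ≤ transportCost d γ.1 := csInf_le
        ⟨0, forall_mem_image.2 fun γ _ => transportCost_nonneg (fun x y => (hd x y).1) γ.1⟩
        (mem_image_of_mem (fun γ : SubProb (X × X) => transportCost d γ.1) hγ)
    _ ≤ γ.1.real univ := transportCost_le_measureReal_univ
        (fun x y => (abs_of_nonneg (hd x y).1).trans_le (hd x y).2) γ.1
    _ = ν.1.real univ := congrArg ENNReal.toReal (measure_univ_of_mem_subcouplings hγ)
  rw [uwAux_eq_sInf_transportCost]
  linarith [μ.measureReal_univ_le_one]

-- Between measures of equal mass every subcoupling is a coupling, so it can be reversed.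
lemma image_transportCost_subcouplings_subset (hd : ∀ x y, d x y = d y x) {μ ν : Measure X}
    (h : μ univ = ν univ) :
    (fun γ : SubProb (X × X) => transportCost d γ.1) '' subcouplings μ ν ⊆
      (fun γ : SubProb (X × X) => transportCost d γ.1) '' subcouplings ν μ := by
  rintro _ ⟨γ, hγ, rfl⟩
  have hfst : γ.1.map Prod.fst = μ := by
    refine Measure.eq_of_le_of_measure_univ_eq hγ.1 ?_
    rw [h, ← measure_univ_of_mem_subcouplings hγ, Measure.map_apply measurable_fst .univ,
      preimage_univ]
  refine ⟨⟨γ.1.map Prod.swap, ?_⟩, ⟨?_, ?_⟩, ?_⟩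
  · rw [Measure.map_apply measurable_swap .univ]
    exact γ.2
  · rw [Measure.map_map measurable_fst measurable_swap]
    exact hγ.2.le
  · rw [Measure.map_map measurable_snd measurable_swap]
    exact hfst
  · simp only [transportCost_map_swap, ← hd]

lemma uwAux_comm (hd : ∀ x y, d x y = d y x) {μ ν : Measure X} (h : μ univ = ν univ) :
    uwAux d μ ν = uwAux d ν μ := by
  rw [uwAux_eq_sInf_transportCost, uwAux_eq_sInf_transportCost, Measure.real, Measure.real, h,
    (image_transportCost_subcouplings_subset hd h).antisymm
      (image_transportCost_subcouplings_subset hd h.symm)]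

lemma uwDist_of_le (d : X → X → ℝ) {μ ν : Measure X} (h : ν univ ≤ μ univ) :
    uwDist d μ ν = uwAux d μ ν :=
  if_pos h

lemma uwDist_comm (hd : ∀ x y, d x y = d y x) (μ ν : Measure X) :
    uwDist d μ ν = uwDist d ν μ := by
  unfold uwDist
  rcases lt_trichotomy (ν univ) (μ univ) with h | h | h
  · rw [if_pos h.le, if_neg h.not_ge]
  · rw [if_pos h.le, if_pos h.ge, uwAux_comm hd h.symm]
  · rw [if_neg h.not_ge, if_pos h.le]

lemma uwDist_mem_Icc (hd : ∀ x y, d x y ∈ Icc (0 : ℝ) 1) (μ ν : SubProb X) :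
    uwDist d μ.1 ν.1 ∈ Icc (0 : ℝ) 1 := by
  unfold uwDist
  split_ifs with h
  · exact ⟨uwAux_nonneg (fun x y => (hd x y).1) h, uwAux_le_one hd h⟩
  · have h := (not_le.1 h).le
    exact ⟨uwAux_nonneg (fun x y => (hd x y).1) h, uwAux_le_one hd h⟩

end UnbalancedTransport

section UnbalancedTransportTopology

variable {X : Type} [TopologicalSpace X] [CompactSpace X] [MetrizableSpace X] [MeasurableSpace X]
  [BorelSpace X] {d : X → X → ℝ} {C : ℝ}

lemma lowerSemicontinuous_transportCost (hdC : ∀ x y, |d x y| ≤ C)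
    (hlsc : LowerSemicontinuous (Function.uncurry d)) :
    LowerSemicontinuous fun γ : SubProb (X × X) => transportCost d γ.1 :=
  (lowerSemicontinuous_integral_finiteMeasure hlsc fun p => hdC p.1 p.2).comp
    SubProb.continuous_toFiniteMeasure

lemma isClosed_setOf_mem_subcouplings :
    IsClosed {q : (SubProb X × SubProb X) × SubProb (X × X) |
      q.2 ∈ subcouplings q.1.1.1 q.1.2.1} := by
  have continuous_marginal {π : X × X → X} (hπ : Continuous π) :
      Continuous fun q : (SubProb X × SubProb X) × SubProb (X × X) => q.2.toFiniteMeasure.map π :=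
    (FiniteMeasure.continuous_map hπ).comp (SubProb.continuous_toFiniteMeasure.comp continuous_snd)
  have marginals_eq : {q : (SubProb X × SubProb X) × SubProb (X × X) |
      q.2 ∈ subcouplings q.1.1.1 q.1.2.1} =
      {q | (q.2.toFiniteMeasure.map Prod.fst : Measure X) ≤ q.1.1.toFiniteMeasure} ∩
        {q | q.2.toFiniteMeasure.map Prod.snd = q.1.2.toFiniteMeasure} := by
    ext q
    exact and_congr_right fun _ =>
      FiniteMeasure.toMeasure_injective.eq_iff (a := q.2.toFiniteMeasure.map Prod.snd)
        (b := q.1.2.toFiniteMeasure)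
  rw [marginals_eq]
  refine .inter ?_ ?_
  · exact isClosed_setOf_finiteMeasure_le.preimage ((continuous_marginal continuous_fst).prodMk
      (SubProb.continuous_toFiniteMeasure.comp (continuous_fst.comp continuous_fst)))
  · exact isClosed_eq (continuous_marginal continuous_snd)
      (SubProb.continuous_toFiniteMeasure.comp (continuous_snd.comp continuous_fst))

lemma lowerSemicontinuousOn_uwAux (hdC : ∀ x y, |d x y| ≤ C)
    (hlsc : LowerSemicontinuous (Function.uncurry d)) :
    LowerSemicontinuousOn (fun p : SubProb X × SubProb X => uwAux d p.1.1 p.2.1)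
      {p | p.2.1 univ ≤ p.1.1 univ} := by
  have domain_eq : {p : SubProb X × SubProb X | p.2.1 univ ≤ p.1.1 univ} =
      Prod.fst '' {q : (SubProb X × SubProb X) × SubProb (X × X) |
        q.2 ∈ subcouplings q.1.1.1 q.1.2.1} := by
    ext p
    simp [← subcouplings_nonempty_iff, Set.Nonempty]
  have mass_continuous : Continuous fun p : SubProb X × SubProb X =>
      p.1.1.real univ - p.2.1.real univ :=
    (SubProb.continuous_measureReal_univ.comp continuous_fst).sub
      (SubProb.continuous_measureReal_univ.comp continuous_snd)
  simp only [uwAux_eq_sInf_transportCost, domain_eq]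
  exact mass_continuous.continuousOn.lowerSemicontinuousOn.add
    (lowerSemicontinuousOn_sInf_image_fiber isClosed_setOf_mem_subcouplings
      ((lowerSemicontinuous_transportCost hdC hlsc).comp continuous_snd))

lemma lowerSemicontinuous_uwDist (hdC : ∀ x y, |d x y| ≤ C)
    (hcomm : ∀ x y, d x y = d y x) (hlsc : LowerSemicontinuous (Function.uncurry d)) :
    LowerSemicontinuous fun p : SubProb X × SubProb X => uwDist d p.1.1 p.2.1 := by
  have isClosed_le_mass : IsClosed {p : SubProb X × SubProb X | p.2.1 univ ≤ p.1.1 univ} := by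
    simp only [← ENNReal.toReal_le_toReal (measure_ne_top _ _) (measure_ne_top _ _)]
    exact isClosed_le (SubProb.continuous_measureReal_univ.comp continuous_snd)
      (SubProb.continuous_measureReal_univ.comp continuous_fst)
  have lsc := lowerSemicontinuousOn_uwAux hdC hlsc
  exact lowerSemicontinuous_of_isClosed_cover isClosed_le_mass
    (isClosed_le_mass.preimage continuous_swap)
    (eq_univ_of_forall fun p => le_total (p.2.1 univ) (p.1.1 univ)) lsc
    (lsc.comp continuous_swap.continuousOn (mapsTo_preimage _ _))
    (fun p hp => uwDist_of_le d hp)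
    fun p hp => (uwDist_comm hcomm _ _).trans (uwDist_of_le d hp)

end UnbalancedTransportTopology

section TransportDuality

variable {X : Type} [MeasurableSpace X] {d : X → X → ℝ} {f : X → ℝ} {C L : ℝ}

lemma abs_integral_sub_le_mul_uwAux (hdm : Measurable (Function.uncurry d))
    (hdC : ∀ x y, |d x y| ≤ C) (hL : 0 ≤ L) (hf : ∀ x y, |f x - f y| ≤ L * d x y)
    (hfm : Measurable f) (hfL : ∀ x, |f x| ≤ L) {μ ν : SubProb X} (h : ν.1 univ ≤ μ.1 univ) :
    |∫ x, f x ∂μ.1 - ∫ x, f x ∂ν.1| ≤ L * uwAux d μ.1 ν.1 := by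
  have integrable (ρ : Measure X) [IsFiniteMeasure ρ] : Integrable f ρ :=
    .of_bound hfm.aestronglyMeasurable L (ae_of_all _ hfL)
  rw [uwAux_eq_sInf_transportCost, mul_add, ← sub_le_iff_le_add']
  refine le_mul_csInf (((subcouplings_nonempty_iff μ ν).2 h).image _) hL
    (forall_mem_image.2 fun γ hγ => sub_le_iff_le_add'.2 ?_)
  have fst_mass : (γ.1.map Prod.fst).real univ = ν.1.real univ := by
    rw [map_measureReal_apply measurable_fst .univ, preimage_univ]
    exact congrArg ENNReal.toReal (measure_univ_of_mem_subcouplings hγ)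
  calc |∫ x, f x ∂μ.1 - ∫ x, f x ∂ν.1|
      ≤ |∫ x, f x ∂μ.1 - ∫ x, f x ∂γ.1.map Prod.fst| +
          |∫ x, f x ∂γ.1.map Prod.fst - ∫ x, f x ∂ν.1| := abs_sub_le _ _ _
    _ ≤ L * (μ.1.real univ - ν.1.real univ) + L * transportCost d γ.1 := by
      gcongr
      · rw [← fst_mass]
        exact abs_integral_sub_le_mul_of_le hγ.1 hfm.aestronglyMeasurable hfL
      · rw [← hγ.2]
        exact abs_integral_map_fst_sub_integral_map_snd_le (integrable _) (integrable _)
          (integrable_uncurry_of_abs_le hdm hdC γ.1) hf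

lemma abs_integral_sub_le_mul_uwDist (hdm : Measurable (Function.uncurry d))
    (hdC : ∀ x y, |d x y| ≤ C) (hL : 0 ≤ L) (hf : ∀ x y, |f x - f y| ≤ L * d x y)
    (hfm : Measurable f) (hfL : ∀ x, |f x| ≤ L) (μ ν : SubProb X) :
    |∫ x, f x ∂μ.1 - ∫ x, f x ∂ν.1| ≤ L * uwDist d μ.1 ν.1 := by
  unfold uwDist
  split_ifs with h
  · exact abs_integral_sub_le_mul_uwAux hdm hdC hL hf hfm hfL h
  · rw [abs_sub_comm]
    exact abs_integral_sub_le_mul_uwAux hdm hdC hL hf hfm hfL (not_le.1 h).le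

end TransportDuality

section IteratedDegreeMeasures

lemma compactSpace_and_metrizableSpace_M (h : ℕ) : CompactSpace (M h) ∧ MetrizableSpace (M h) := by
  induction h with
  | zero => exact ⟨inferInstanceAs (CompactSpace Unit), inferInstanceAs (MetrizableSpace Unit)⟩
  | succ h ih =>
    have := ih.1
    have := ih.2
    exact ⟨inferInstanceAs (CompactSpace (SubProb (M h))),
      inferInstanceAs (MetrizableSpace (SubProb (M h)))⟩

instance (h : ℕ) : CompactSpace (M h) :=
  (compactSpace_and_metrizableSpace_M h).1

instance (h : ℕ) : MetrizableSpace (M h) :=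
  (compactSpace_and_metrizableSpace_M h).2

lemma Wdist_mem_Icc (h : ℕ) (α β : M h) : Wdist h α β ∈ Icc (0 : ℝ) 1 := by
  induction h with
  | zero => exact ⟨le_rfl, zero_le_one⟩
  | succ h ih => exact uwDist_mem_Icc ih (toSub α) (toSub β)

lemma abs_Wdist_le_one (h : ℕ) (α β : M h) : |Wdist h α β| ≤ 1 :=
  (abs_of_nonneg (Wdist_mem_Icc h α β).1).trans_le (Wdist_mem_Icc h α β).2

lemma Wdist_comm (h : ℕ) (α β : M h) : Wdist h α β = Wdist h β α := by
  induction h with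
  | zero => rfl
  | succ h ih => exact uwDist_comm ih (toMeas α) (toMeas β)

lemma lowerSemicontinuous_Wdist (h : ℕ) : LowerSemicontinuous (Function.uncurry (Wdist h)) := by
  induction h with
  | zero => exact lowerSemicontinuous_const
  | succ h ih =>
    exact lowerSemicontinuous_uwDist (X := M h) (abs_Wdist_le_one h) (Wdist_comm h) ih

lemma measurable_Wdist (h : ℕ) : Measurable (Function.uncurry (Wdist h)) :=
  (lowerSemicontinuous_Wdist h).measurable

end IteratedDegreeMeasures

section TreeDensity

lemma nE_succ (h : ℕ) (cs : List (TreeH h)) :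
    nE (h + 1) cs = (cs.map fun S => 1 + nE h S).sum := by
  change cs.length + (cs.map (nE h)).sum = _
  simp [List.sum_map_add]

lemma nV_eq_nE_add_one (h : ℕ) (T : TreeH h) : nV h T = nE h T + 1 := by
  induction h with
  | zero => rfl
  | succ h ih =>
    calc nV (h + 1) T = 1 + (List.map (nV h) T).sum := rfl
      _ = nE (h + 1) T + 1 := by simp only [nE_succ h T, funext ih, add_comm]

lemma abs_integral_le_one {X : Type} [MeasurableSpace X] (μ : SubProb X) {f : X → ℝ}
    (hf : ∀ x, |f x| ≤ 1) : |∫ x, f x ∂μ.1| ≤ 1 :=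
  calc |∫ x, f x ∂μ.1|
      ≤ 1 * μ.1.real univ := norm_integral_le_of_norm_le_const (f := f) (ae_of_all μ.1 hf)
    _ ≤ 1 := (one_mul _).trans_le μ.measureReal_univ_le_one

lemma abs_prod_map_le_one {ι : Type*} {f : ι → ℝ} (hf : ∀ i, |f i| ≤ 1) (l : List ι) :
    |(l.map f).prod| ≤ 1 :=
  (Submonoid.mem_unitClosedBall ℝ).1 <| list_prod_mem <| List.forall_mem_map.2 fun i _ =>
    (Submonoid.mem_unitClosedBall ℝ).2 (hf i)

lemma abs_homDen_le_one (h : ℕ) (T : TreeH h) (α : M h) : |homDen h T α| ≤ 1 := by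
  induction h with
  | zero => exact abs_one.le
  | succ h ih => exact abs_prod_map_le_one (fun S => abs_integral_le_one (toSub α) (ih S)) T

lemma continuous_homDen (h : ℕ) (T : TreeH h) : Continuous (homDen h T) := by
  induction h with
  | zero => exact continuous_const
  | succ h ih =>
    exact continuous_list_prod T fun S _ =>
      SubProb.continuous_integral (.mkOfCompact ⟨homDen h S, ih S⟩)

lemma integrable_homDen (h : ℕ) (T : TreeH h) (μ : Measure (M h)) [IsFiniteMeasure μ] :
    Integrable (homDen h T) μ :=
  .of_bound (continuous_homDen h T).aestronglyMeasurable 1 (ae_of_all μ (abs_homDen_le_one h T))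

lemma abs_prod_map_sub_prod_map_le_sum {ι : Type*} {f g : ι → ℝ} (hf : ∀ i, |f i| ≤ 1)
    (hg : ∀ i, |g i| ≤ 1) (l : List ι) :
    |(l.map f).prod - (l.map g).prod| ≤ (l.map fun i => |f i - g i|).sum := by
  induction l with
  | nil => simp
  | cons i l ih =>
    simp only [List.map_cons, List.prod_cons, List.sum_cons]
    calc |f i * (l.map f).prod - g i * (l.map g).prod|
        = |f i * ((l.map f).prod - (l.map g).prod) + (f i - g i) * (l.map g).prod| := by ring_nf
      _ ≤ |f i| * |(l.map f).prod - (l.map g).prod| + |f i - g i| * |(l.map g).prod| :=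
          (abs_add_le _ _).trans_eq (by rw [abs_mul, abs_mul])
      _ ≤ 1 * (l.map fun i => |f i - g i|).sum + |f i - g i| * 1 := by
          gcongr
          exacts [hf i, abs_prod_map_le_one hg l]
      _ = |f i - g i| + (l.map fun i => |f i - g i|).sum := by ring

-- The extra `1` in the constant pays for the mass that a subcoupling leaves untransported.
lemma abs_integral_homDen_sub_le {h : ℕ} {S : TreeH h}
    (hS : ∀ x y, |homDen h S x - homDen h S y| ≤ nE h S * Wdist h x y) (α β : M (h + 1)) :
    |∫ x, homDen h S x ∂toMeas α - ∫ x, homDen h S x ∂toMeas β| ≤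
      ((1 + nE h S : ℕ) : ℝ) * Wdist (h + 1) α β := by
  refine abs_integral_sub_le_mul_uwDist (measurable_Wdist h) (abs_Wdist_le_one h)
    (Nat.cast_nonneg _) (fun x y => (hS x y).trans ?_) (continuous_homDen h S).measurable
    (fun x => (abs_homDen_le_one h S x).trans ?_) (toSub α) (toSub β)
  · exact mul_le_mul_of_nonneg_right (by simp) (Wdist_mem_Icc h x y).1
  · simp

lemma sum_map_one_add_nE_mul {h : ℕ} (cs : List (TreeH h)) (w : ℝ) :
    (cs.map fun S => ((1 + nE h S : ℕ) : ℝ) * w).sum = nE (h + 1) cs * w := by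
  rw [nE_succ, Nat.cast_list_sum, List.map_map, ← List.sum_map_mul_right]
  rfl

lemma abs_homDen_sub_le (h : ℕ) (T : TreeH h) (α β : M h) :
    |homDen h T α - homDen h T β| ≤ nE h T * Wdist h α β := by
  induction h with
  | zero => simp [homDen, nE]
  | succ h ih =>
    have integral_le (ξ : M (h + 1)) (S : TreeH h) : |∫ x, homDen h S x ∂toMeas ξ| ≤ 1 :=
      abs_integral_le_one (toSub ξ) (abs_homDen_le_one h S)
    calc |homDen (h + 1) T α - homDen (h + 1) T β|
        ≤ (List.map (fun S => |∫ x, homDen h S x ∂toMeas α - ∫ x, homDen h S x ∂toMeas β|) T).sum :=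
          abs_prod_map_sub_prod_map_le_sum (integral_le α) (integral_le β) T
      _ ≤ (List.map (fun S => ((1 + nE h S : ℕ) : ℝ) * Wdist (h + 1) α β) T).sum :=
          List.sum_le_sum fun S _ => abs_integral_homDen_sub_le (ih S) α β
      _ = nE (h + 1) T * Wdist (h + 1) α β := sum_map_one_add_nE_mul T _

lemma abs_integral_homDen_sub_le_nE_mul_wassersteinDist (h : ℕ) (T : TreeH h) (μ ν : Measure (M h))
    [IsProbabilityMeasure μ] [IsProbabilityMeasure ν] :
    |∫ α, homDen h T α ∂μ - ∫ α, homDen h T α ∂ν| ≤ nE h T * wassersteinDist (Wdist h) μ ν :=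
  abs_integral_sub_le_mul_wassersteinDist (measurable_Wdist h) (abs_Wdist_le_one h)
    (Nat.cast_nonneg _) (abs_homDen_sub_le h T) (integrable_homDen h T μ) (integrable_homDen h T ν)

end TreeDensity

/-- The counting lemma for trees: tree homomorphism density functions are Lipschitz
w.r.t. the iterated unbalanced Wasserstein metrics, with constant `|E(T)|` on `M h`
and constant `|V(T)|` for the induced Wasserstein metric on `P(M h)`. -/
theorem tree_counting_lemma (h : ℕ) (T : TreeH h) :
    (∀ α β : M h,
      |homDen h T α - homDen h T β| ≤ (nE h T : ℝ) * Wdist h α β) ∧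
    (∀ μ ν : ProbM (M h),
      |(∫ α, homDen h T α ∂μ.1) - ∫ α, homDen h T α ∂ν.1| ≤
        (nV h T : ℝ) * wassersteinDist (Wdist h) μ.1 ν.1) := by
  refine ⟨abs_homDen_sub_le h T, fun μ ν => ?_⟩
  have := μ.2
  have := ν.2
  have nE_le_nV : nE h T ≤ nV h T := (nV_eq_nE_add_one h T).symm ▸ Nat.le_succ _
  refine (abs_integral_homDen_sub_le_nE_mul_wassersteinDist h T μ.1 ν.1).trans ?_
  exact mul_le_mul_of_nonneg_right (Nat.cast_le.2 nE_le_nV)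
    (wassersteinDist_nonneg (fun α β => (Wdist_mem_Icc h α β).1) μ.1 ν.1)

end
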